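/- arXiv:0912.0478 — 2 statements merged into one kernel-verified Lean document; each statement's English description precedes it below -/
import Mathlib

section
/- Let L be a bounded distributive lattice. A function g : {0,1}^n → L can be extended to a lattice polynomial function f : L^n → L (i.e., there is a lattice polynomial function f whose restriction to {0,1}^n equals g) if and only if g is nondecreasing with respect to the componentwise order on {0,1}^n. Moreover, when such an extension exists, it is unique. -/
/-- Lattice polynomial functions: the smallest class of functions `L^n → L`
containing the projections and the constant functions and closed under
pointwise joins and meets. -/
inductive IsLatticePolynomial {L : Type*} [Lattice L] {n : ℕ} : ((Fin n → L) → L) → Prop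
  | proj (i : Fin n) : IsLatticePolynomial (fun x => x i)
  | const (c : L) : IsLatticePolynomial (fun _ => c)
  | sup {f g : (Fin n → L) → L} : IsLatticePolynomial f → IsLatticePolynomial g →
      IsLatticePolynomial (fun x => f x ⊔ g x)
  | inf {f g : (Fin n → L) → L} : IsLatticePolynomial f → IsLatticePolynomial g →
      IsLatticePolynomial (fun x => f x ⊓ g x)

theorem IsLatticePolynomial.mono_aux {L : Type*} [Lattice L] {n : ℕ} {f : (Fin n → L) → L}
    (hf : IsLatticePolynomial f) : Monotone f := by
  induction hf with
  | proj i => exact fun x y h => h i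
  | const c => exact fun x y h => le_rfl
  | sup _ _ h1 h2 => exact fun x y h => sup_le_sup (h1 h) (h2 h)
  | inf _ _ h1 h2 => exact fun x y h => inf_le_inf (h1 h) (h2 h)

theorem IsLatticePolynomial.decomp_aux {L : Type*} [DistribLattice L] [BoundedOrder L] {n : ℕ}
    {f : (Fin n → L) → L} (hf : IsLatticePolynomial f) (x : Fin n → L) (i : Fin n) :
    f x = f (Function.update x i ⊥) ⊔ x i ⊓ f (Function.update x i ⊤) := by
  have hu : Function.update x i (⊥ : L) ≤ Function.update x i ⊤ := by
    intro j
    by_cases h : j = i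
    · subst h; simp
    · simp [h]
  induction hf with
  | proj j =>
    by_cases h : j = i
    · subst h; simp
    · simp [h]
  | const c => simp
  | @sup p q hp hq h1 h2 =>
    simp only []
    rw [inf_sup_left, h1, h2]
    ac_rfl
  | @inf p q hp hq h1 h2 =>
    simp only []
    have m1 := hp.mono_aux hu
    have m2 := hq.mono_aux hu
    rw [← sup_inf_assoc_of_le _ m1] at h1
    rw [← sup_inf_assoc_of_le _ m2] at h2
    rw [← sup_inf_assoc_of_le _ (inf_le_inf m1 m2), h1, h2, sup_inf_right]
    ac_rfl

theorem IsLatticePolynomial.finset_sup_aux {L ι : Type*} [DistribLattice L] [BoundedOrder L]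
    {n : ℕ} (F : ι → (Fin n → L) → L) (hF : ∀ j, IsLatticePolynomial (F j)) (s : Finset ι) :
    IsLatticePolynomial (fun x => s.sup (fun j => F j x)) := by
  classical
  induction s using Finset.induction_on with
  | empty => simpa using IsLatticePolynomial.const (⊥ : L)
  | insert a s _ ih => simpa only [Finset.sup_insert] using (hF a).sup ih

theorem IsLatticePolynomial.finset_inf_aux {L ι : Type*} [DistribLattice L] [BoundedOrder L]
    {n : ℕ} (F : ι → (Fin n → L) → L) (hF : ∀ j, IsLatticePolynomial (F j)) (s : Finset ι) :
    IsLatticePolynomial (fun x => s.inf (fun j => F j x)) := by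
  classical
  induction s using Finset.induction_on with
  | empty => simpa using IsLatticePolynomial.const (⊤ : L)
  | insert a s _ ih => simpa only [Finset.inf_insert] using (hF a).inf ih

theorem IsLatticePolynomial.unique_aux {L : Type*} [DistribLattice L] [BoundedOrder L] {n : ℕ}
    {p q : (Fin n → L) → L} (hp : IsLatticePolynomial p) (hq : IsLatticePolynomial q)
    (h : ∀ b : Fin n → Bool, p (fun i => if b i then ⊤ else ⊥) = q (fun i => if b i then ⊤ else ⊥))
    (s : Finset (Fin n)) :
    ∀ x : Fin n → L, (∀ i, i ∉ s → x i = ⊥ ∨ x i = ⊤) → p x = q x := by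
  classical
  induction s using Finset.induction_on with
  | empty =>
    intro x hx
    have : x = fun i => if (decide (x i = ⊤) : Bool) then ⊤ else ⊥ := by
      funext i
      by_cases ht : x i = ⊤
      · simp [ht]
      · simpa [ht] using (hx i (by simp)).resolve_right ht
    rw [this]
    exact h _
  | insert a s _ ih =>
    intro x hx
    rw [hp.decomp_aux x a, hq.decomp_aux x a, ih (Function.update x a ⊥), ih (Function.update x a ⊤)]
    all_goals
      intro i hi
      by_cases hia : i = a
      · subst hia; simp
      · simpa [hia] using hx i (by simp [hia, hi])

/-- A function `g : {0,1}^n → L` extends to a lattice polynomial function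
`f : L^n → L` if and only if `g` is nondecreasing; moreover the extension
is unique whenever it exists. Here `{0,1}^n` is modelled as `Fin n → Bool`,
with `b : Fin n → Bool` corresponding to the tuple whose `i`-th entry is
`⊤` if `b i = true` and `⊥` otherwise. -/
theorem extension_to_latticePolynomial_iff_monotone {L : Type*} [DistribLattice L]
    [BoundedOrder L] {n : ℕ} (g : (Fin n → Bool) → L) :
    ((∃ f : (Fin n → L) → L, IsLatticePolynomial f ∧
        ∀ b : Fin n → Bool, f (fun i => if b i then ⊤ else ⊥) = g b) ↔ Monotone g)
    ∧
    (∀ f₁ f₂ : (Fin n → L) → L, IsLatticePolynomial f₁ → IsLatticePolynomial f₂ →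
        (∀ b : Fin n → Bool, f₁ (fun i => if b i then ⊤ else ⊥) = g b) →
        (∀ b : Fin n → Bool, f₂ (fun i => if b i then ⊤ else ⊥) = g b) →
        f₁ = f₂) := by
  refine ⟨⟨?_, ?_⟩, ?_⟩
  · rintro ⟨f, hf, hg⟩ b c hbc
    rw [← hg, ← hg]
    apply hf.mono_aux
    intro i
    have := hbc i
    cases hb : b i <;> cases hc : c i <;> simp_all
    exact absurd this (show ¬ (true ≤ false) by decide)
  · intro hg
    refine ⟨fun x => Finset.univ.sup fun b : Fin n → Bool =>
      g b ⊓ Finset.univ.inf fun i => if b i then x i else ⊤, ?_, ?_⟩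
    · apply IsLatticePolynomial.finset_sup_aux
        (fun (b : Fin n → Bool) x => g b ⊓ Finset.univ.inf fun i => if b i then x i else ⊤)
      intro b
      refine (IsLatticePolynomial.const (g b)).inf
        (IsLatticePolynomial.finset_inf_aux (fun i x => if b i then x i else ⊤) ?_ _)
      intro i
      cases b i
      · simpa using IsLatticePolynomial.const (⊤ : L)
      · simpa using IsLatticePolynomial.proj i
    · intro c
      apply le_antisymm
      · refine Finset.sup_le fun b _ => ?_
        by_cases hbc : b ≤ c
        · exact inf_le_left.trans (hg hbc)
        · rw [Pi.le_def, not_forall] at hbc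
          obtain ⟨i, hi⟩ := hbc
          refine (inf_le_right.trans (Finset.inf_le (Finset.mem_univ i))).trans ?_
          cases hb : b i <;> cases hc : c i <;> simp_all
      · refine le_trans ?_ (Finset.le_sup (Finset.mem_univ c))
        refine le_inf le_rfl (Finset.le_inf fun i _ => ?_)
        cases hc : c i <;> simp [hc]
  · intro p q hp hq h1 h2
    funext x
    exact hp.unique_aux hq (fun b => (h1 b).trans (h2 b).symm) Finset.univ x (by simp)
end

section
/- Let L be a bounded chain (a bounded linearly ordered lattice). If a lattice polynomial function f : L^n → L is self-commuting, then f is a weighted disjunction or f has chain form. -/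
/-- `f` commutes with `g`. -/
def Commutes {A : Type*} {n m : ℕ} (f : (Fin n → A) → A) (g : (Fin m → A) → A) : Prop :=
  ∀ M : Fin n → Fin m → A,
    f (fun i => g (fun j => M i j)) = g (fun j => f (fun i => M i j))

/-- `f` is self-commuting. -/
def SelfCommuting {A : Type*} {n : ℕ} (f : (Fin n → A) → A) : Prop :=
  Commutes f f

/-- `f` is a weighted disjunction:
`f(x) = a_∅ ∨ ⋁_{i ∈ [n]} (a_i ∧ x_i)` for some coefficients. -/
def IsWeightedDisjunction {L : Type*} [Lattice L] {n : ℕ} (f : (Fin n → L) → L) : Prop :=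
  ∃ (a₀ : L) (a : Fin n → L),
    ∀ x : Fin n → L,
      f x = Finset.univ.fold (fun u v : L => u ⊔ v) a₀ (fun i => a i ⊓ x i)

/-- `f` has chain form:
`f(x) = a_∅ ∨ ⋁_{i ∈ [n]} (a_i ∧ x_i) ∨ ⋁_{1 ≤ ℓ ≤ r} (a_{S_ℓ} ∧ ⋀_{i ∈ S_ℓ} x_i)`
for a chain of subsets `S_1 ⊆ ⋯ ⊆ S_r ⊆ [n]` with `r ≥ 1` and `|S_1| ≥ 2`,
where the coefficients satisfy `a_I ≤ a_J` whenever `I ⊆ J` among the indexed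
sets, and for every `i ∉ S_1` there is `j ∈ S_1` with `a_i ≤ a_j`. -/
def HasChainForm {L : Type*} [Lattice L] {n : ℕ} (f : (Fin n → L) → L) : Prop :=
  ∃ (r : ℕ) (hr : 0 < r) (S : Fin r → Finset (Fin n)) (a₀ : L) (a : Fin n → L)
    (b : Fin r → L) (hne : ∀ ℓ : Fin r, (S ℓ).Nonempty),
    (∀ ℓ m : Fin r, ℓ ≤ m → S ℓ ⊆ S m) ∧
    2 ≤ (S ⟨0, hr⟩).card ∧
    (∀ i, a₀ ≤ a i) ∧
    (∀ ℓ, a₀ ≤ b ℓ) ∧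
    (∀ i ℓ, i ∈ S ℓ → a i ≤ b ℓ) ∧
    (∀ ℓ m, S ℓ ⊆ S m → b ℓ ≤ b m) ∧
    (∀ i, i ∉ S ⟨0, hr⟩ → ∃ j ∈ S ⟨0, hr⟩, a i ≤ a j) ∧
    ∀ x : Fin n → L,
      f x = Finset.univ.fold (fun u v : L => u ⊔ v)
        (Finset.univ.fold (fun u v : L => u ⊔ v) a₀ (fun i => a i ⊓ x i))
        (fun ℓ : Fin r => b ℓ ⊓ (S ℓ).inf' (hne ℓ) (fun i => x i))

section Helpers

variable {L : Type*} [LinearOrder L] [BoundedOrder L] {n : ℕ}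

/-- value of `f` at the indicator of `S` -/
def alphaVal (f : (Fin n → L) → L) (S : Finset (Fin n)) : L :=
  f (fun i => if i ∈ S then ⊤ else ⊥)

theorem latPoly_mono {f : (Fin n → L) → L} (hf : IsLatticePolynomial f) : Monotone f := by
  induction hf with
  | proj i => exact fun x y h => h i
  | const c => exact fun x y h => le_rfl
  | sup _ _ h1 h2 => exact fun x y h => sup_le_sup (h1 h) (h2 h)
  | inf _ _ h1 h2 => exact fun x y h => inf_le_inf (h1 h) (h2 h)

theorem alphaVal_mono {f : (Fin n → L) → L} (hf : IsLatticePolynomial f) {S T : Finset (Fin n)}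
    (h : S ⊆ T) : alphaVal f S ≤ alphaVal f T := by
  apply latPoly_mono hf
  intro i
  by_cases h1 : i ∈ S
  · simp [h1, h h1]
  · simp [h1]

theorem latPoly_threshold {f : (Fin n → L) → L} (hf : IsLatticePolynomial f) {t : L} (ht : t ≠ ⊥)
    (x : Fin n → L) : t ≤ f x ↔ t ≤ alphaVal f (Finset.univ.filter (fun i => t ≤ x i)) := by
  unfold alphaVal
  induction hf with
  | proj i =>
    by_cases h : t ≤ x i
    · simp [h]
    · simp [h, ht]
  | const c => rfl
  | sup _ _ h1 h2 => simp only [le_sup_iff, h1, h2]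
  | inf _ _ h1 h2 => simp only [le_inf_iff, h1, h2]

theorem commute_threshold {f : (Fin n → L) → L} (hf : IsLatticePolynomial f)
    (hsc : SelfCommuting f) {t : L} (ht : t ≠ ⊥) (R : Fin n → Finset (Fin n)) :
    t ≤ alphaVal f (Finset.univ.filter (fun i => t ≤ alphaVal f (R i))) ↔
    t ≤ alphaVal f (Finset.univ.filter (fun j =>
      t ≤ alphaVal f (Finset.univ.filter (fun i => j ∈ R i)))) := by
  have h := hsc (fun i j => if j ∈ R i then ⊤ else ⊥)
  have h1 := latPoly_threshold hf ht (fun i => f (fun j => if j ∈ R i then ⊤ else ⊥))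
  have h2 := latPoly_threshold hf ht (fun j => f (fun i => if j ∈ R i then ⊤ else ⊥))
  rw [h] at h1
  have h3 := h1.symm.trans h2
  have e1 : ∀ j, (f fun i => if j ∈ R i then ⊤ else ⊥) =
      alphaVal f (Finset.univ.filter (fun i => j ∈ R i)) := by
    intro j; simp [alphaVal]
  simp only [e1] at h3
  exact h3

/-- `C` is the least element of its own threshold family, of size at least two -/
def ConjSet (f : (Fin n → L) → L) (C : Finset (Fin n)) : Prop :=
  2 ≤ C.card ∧ ∀ S, alphaVal f C ≤ alphaVal f S ↔ C ⊆ S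

theorem classify {f : (Fin n → L) → L} (hf : IsLatticePolynomial f)
    (hsc : SelfCommuting f) {t : L} (ht : ¬ t ≤ alphaVal f ∅) {S : Finset (Fin n)}
    (hS : t ≤ alphaVal f S) (hS1 : ∀ i ∈ S, ¬ t ≤ alphaVal f {i}) :
    ∃ C, ConjSet f C ∧ C ⊆ S ∧ t ≤ alphaVal f C ∧ ∀ D, t ≤ alphaVal f D → C ⊆ D := by
  have ht0 : t ≠ ⊥ := by rintro rfl; exact ht bot_le
  obtain ⟨C, hCS, hCmin⟩ := (Set.toFinite {T : Finset (Fin n) | t ≤ alphaVal f T}).exists_le_minimal hS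
  have hC : t ≤ alphaVal f C := hCmin.1
  have hmin : ∀ T, T ⊆ C → t ≤ alphaVal f T → C ⊆ T := fun T h1 h2 => hCmin.2 h2 h1
  have hsing : ∀ c ∈ C, ¬ t ≤ alphaVal f {c} := fun c hc => hS1 c (hCS hc)
  have hcard : 2 ≤ C.card := by
    by_contra hlt
    have : C.card = 0 ∨ C.card = 1 := by omega
    rcases this with h | h
    · rw [Finset.card_eq_zero] at h
      subst h; exact ht hC
    · obtain ⟨c, rfl⟩ := Finset.card_eq_one.1 h
      exact hsing c (by simp) hC
  suffices hall : ∀ D, t ≤ alphaVal f D → C ⊆ D from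
    ⟨C, ⟨hcard, fun D => ⟨fun hD => hall D (hC.trans hD), fun h => alphaVal_mono hf h⟩⟩,
      hCS, hC, hall⟩
  intro D hD
  by_contra hCD
  obtain ⟨c, hcC, hcD⟩ := Finset.not_subset.1 hCD
  have key := (commute_threshold hf hsc ht0
    (fun i => if i ∈ C then (if i = c then C else D) else ∅)).1 (hC.trans (alphaVal_mono hf (by
      intro i hi
      by_cases hic : i = c
      · simp [hic, hcC, hC]
      · simp [hi, hic, hD])))
  have hsub : (Finset.univ.filter (fun j => t ≤ alphaVal f (Finset.univ.filter
      (fun i => j ∈ (if i ∈ C then (if i = c then C else D) else ∅))))) ⊆ C ∩ D := by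
    intro j hj
    simp only [Finset.mem_filter, Finset.mem_univ, true_and] at hj
    rw [Finset.mem_inter]
    constructor
    · by_contra hjC
      refine absurd (hmin (C.erase c) (Finset.erase_subset _ _) (hj.trans (alphaVal_mono hf ?_)) hcC) (by simp)
      intro i hi
      simp only [Finset.mem_filter, Finset.mem_univ, true_and] at hi
      split_ifs at hi with h1 h2
      · exact absurd hi hjC
      · simp [h1, h2]
      · simp at hi
    · by_contra hjD
      refine hsing c hcC (hj.trans (alphaVal_mono hf ?_))
      intro i hi
      simp only [Finset.mem_filter, Finset.mem_univ, true_and] at hi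
      split_ifs at hi with h1 h2
      · simp [h2]
      · exact absurd hi hjD
      · simp at hi
  have := hmin _ Finset.inter_subset_left (key.trans (alphaVal_mono hf hsub))
  exact hcD (Finset.mem_inter.1 (this hcC)).2

theorem le_iff_form {f : (Fin n → L) → L} (hf : IsLatticePolynomial f)
    (hsc : SelfCommuting f) (t : L) (x : Fin n → L) :
    t ≤ f x ↔ (t ≤ alphaVal f ∅ ∨ ∃ i, t ≤ alphaVal f {i} ∧ t ≤ x i) ∨
      ∃ C, ConjSet f C ∧ t ≤ alphaVal f C ∧ ∀ i ∈ C, t ≤ x i := by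
  by_cases ht : t = ⊥
  · subst ht; simp
  rw [latPoly_threshold hf ht]
  constructor
  · intro h
    by_cases h0 : t ≤ alphaVal f ∅
    · exact Or.inl (Or.inl h0)
    by_cases h1 : ∃ i, t ≤ alphaVal f {i} ∧ t ≤ x i
    · exact Or.inl (Or.inr h1)
    obtain ⟨C, hC, hCS, hCt, _⟩ := classify hf hsc h0 h (fun i hi h2 => h1 ⟨i, h2, by simpa using hi⟩)
    exact Or.inr ⟨C, hC, hCt, fun i hi => by simpa using hCS hi⟩
  · rintro ((h | ⟨i, h, hi⟩) | ⟨C, _, h, hC⟩)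
    · exact h.trans (alphaVal_mono hf (by simp))
    · exact h.trans (alphaVal_mono hf (by simpa using hi))
    · exact h.trans (alphaVal_mono hf (fun i hi => by simpa using hC i hi))

theorem le_fold_sup {ι : Type*} (s : Finset ι) (b c : L) (g : ι → L) :
    c ≤ s.fold (fun u v : L => u ⊔ v) b g ↔ c ≤ b ∨ ∃ i ∈ s, c ≤ g i :=
  Finset.le_fold_max c

end Helpers

/-- Over a bounded chain, every self-commuting lattice polynomial function is
a weighted disjunction or has chain form. -/
theorem weightedDisjunction_or_chainForm_of_selfCommuting
    {L : Type*} [LinearOrder L] [BoundedOrder L] {n : ℕ}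
    (f : (Fin n → L) → L) (hf : IsLatticePolynomial f) (hsc : SelfCommuting f) :
    IsWeightedDisjunction f ∨ HasChainForm f := by
  classical
  by_cases hne : ∃ C, ConjSet f C
  swap
  · left
    refine ⟨alphaVal f ∅, fun i => alphaVal f {i}, fun x => eq_of_forall_le_iff fun t => ?_⟩
    rw [le_fold_sup, le_iff_form hf hsc]
    simp only [le_inf_iff, Finset.mem_univ, true_and]
    constructor
    · rintro (h | ⟨C, hC, _⟩)
      · exact h
      · exact absurd ⟨C, hC⟩ hne
    · exact Or.inl
  right
  have hchain : ∀ C D, ConjSet f C → ConjSet f D → C.card ≤ D.card → C ⊆ D := by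
    intro C D hC hD h
    rcases le_total (alphaVal f C) (alphaVal f D) with h1 | h1
    · exact (hC.2 D).1 h1
    · exact (Finset.eq_of_subset_of_card_le ((hD.2 C).1 h1) h).symm.subset
  let K : Finset ℕ := (Finset.univ.filter (fun C => ConjSet f C)).image Finset.card
  let e := K.orderEmbOfFin rfl
  have hK : ∀ ℓ, ∃ C, ConjSet f C ∧ C.card = e ℓ := by
    intro ℓ
    obtain ⟨C, hC, h⟩ := Finset.mem_image.1 (K.orderEmbOfFin_mem rfl ℓ)
    exact ⟨C, (Finset.mem_filter.1 hC).2, h⟩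
  choose S hS hScard using hK
  have hr : 0 < K.card := by
    obtain ⟨C, hC⟩ := hne
    exact Finset.card_pos.2 ⟨C.card, Finset.mem_image_of_mem _ (by simpa using hC)⟩
  have hsurj : ∀ C, ConjSet f C → ∃ ℓ, S ℓ = C := by
    intro C hC
    have h1 : C.card ∈ Set.range e := by
      rw [Finset.range_orderEmbOfFin]
      exact Finset.mem_coe.2 (Finset.mem_image_of_mem _ (by simpa using hC))
    obtain ⟨ℓ, hℓ⟩ := h1
    have h2 : (S ℓ).card = C.card := (hScard ℓ).trans hℓ
    exact ⟨ℓ, (hchain _ _ (hS ℓ) hC h2.le).antisymm (hchain _ _ hC (hS ℓ) h2.ge)⟩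
  have hSne : ∀ ℓ, (S ℓ).Nonempty := fun ℓ => Finset.card_pos.1 (by have := (hS ℓ).1; omega)
  refine ⟨K.card, hr, S, alphaVal f ∅, fun i => alphaVal f {i}, fun ℓ => alphaVal f (S ℓ), hSne,
    ?_, (hS _).1, ?_, ?_, ?_, ?_, ?_, ?_⟩
  · intro ℓ m h
    refine hchain _ _ (hS ℓ) (hS m) ?_
    rw [hScard, hScard]
    exact e.monotone h
  · exact fun i => alphaVal_mono hf (by simp)
  · exact fun i => alphaVal_mono hf (by simp)
  · exact fun i ℓ h => alphaVal_mono hf (by simpa using h)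
  · exact fun ℓ m h => alphaVal_mono hf h
  · intro i hi
    by_contra hcon
    push Not at hcon
    have hs := hS ⟨0, hr⟩
    obtain ⟨j, hj⟩ := hSne ⟨0, hr⟩
    have hlt : alphaVal f {i} < alphaVal f (S ⟨0, hr⟩) := by
      by_contra h
      have h3 := (hs.2 _).1 (not_lt.1 h)
      have := Finset.mem_singleton.1 (h3 hj)
      exact hi (this ▸ hj)
    obtain ⟨C, hC, hCS, _, hall⟩ := classify hf hsc (t := alphaVal f {i})
      (fun h => absurd (h.trans (alphaVal_mono hf (by simp))) (hcon j hj).not_ge)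
      hlt.le (fun k hk => (hcon k hk).not_ge)
    have h1 := hall {i} le_rfl
    obtain ⟨k, hk⟩ := Finset.card_pos.1 (lt_of_lt_of_le two_pos hC.1)
    have hki := Finset.mem_singleton.1 (h1 hk)
    exact hi (hki ▸ hCS hk)
  · intro x
    refine eq_of_forall_le_iff fun t => ?_
    rw [le_fold_sup, le_fold_sup, le_iff_form hf hsc]
    simp only [le_inf_iff, Finset.mem_univ, true_and, Finset.le_inf'_iff]
    refine or_congr Iff.rfl ⟨?_, ?_⟩
    · rintro ⟨C, hC, h⟩
      obtain ⟨ℓ, rfl⟩ := hsurj C hC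
      exact ⟨ℓ, h⟩
    · rintro ⟨ℓ, h⟩
      exact ⟨S ℓ, hS ℓ, h⟩
end
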